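/- Let F(x) = 4x(1−x). Let p₀ be a probability density on [0,1] of bounded variation (p₀ ≥ 0, ∫₀¹ p₀ = 1, and the variation of p₀ on [0,1] is finite), let μ₀ be the measure with density p₀, and let p_n be the Radon–Nikodym derivative of (F^n)_*μ₀ with respect to Lebesgue measure. Then there exists a constant c (depending only on p₀) such that ∫₀¹ |p_n(x) − q(x)| dx ≤ c/2ⁿ for all n ∈ ℕ, where q(x) = 1/(π·√(x(1−x))) for 0 < x < 1. -/

import Mathlib

open MeasureTheory Filter Topology

/-- The logistic map with parameter `r = 4`. -/
noncomputable def logisticMap (x : ℝ) : ℝ := 4 * x * (1 - x)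

/-- The invariant density of the logistic map with `r = 4`. -/
noncomputable def logisticDensity (x : ℝ) : ℝ :=
  if 0 < x ∧ x < 1 then 1 / (Real.pi * Real.sqrt (x * (1 - x))) else 0

/-!
Write `p = q h`, where `q` is the invariant density. The two inverse branches
`x ↦ (1 ± √(1 - x)) / 2` of `F` each carry half of the measure `ν = q dx`, so `F` pushes `h ν`
forward to `(T h) ν`, where `T h` is the mean of the compositions of `h` with the two branches.
These branches map `[0, 1]` monotonically onto `[0, 1/2]` and `[1/2, 1]`, so `T` halves the
variation. As `T` also preserves the `ν`-mean and `ν` is a probability measure, `Tⁿ h` lies within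
`Var(h) / 2ⁿ` of that mean everywhere on `[0, 1]`; integrating against `ν` gives the `L¹` bound.
-/

open Set ProbabilityTheory
open scoped ENNReal

section General

theorem eVariationOn_add_le {α E : Type*} [LinearOrder α] [SeminormedAddCommGroup E]
    (f g : α → E) (s : Set α) :
    eVariationOn (f + g) s ≤ eVariationOn f s + eVariationOn g s := by
  refine iSup_le fun ⟨n, u, hu, hus⟩ => ?_
  calc ∑ i ∈ Finset.range n, edist ((f + g) (u (i + 1))) ((f + g) (u i))
      ≤ ∑ i ∈ Finset.range n,
          (edist (f (u (i + 1))) (f (u i)) + edist (g (u (i + 1))) (g (u i))) :=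
        Finset.sum_le_sum fun i _ => edist_add_add_le _ _ _ _
    _ ≤ eVariationOn f s + eVariationOn g s := by
        rw [Finset.sum_add_distrib]
        exact add_le_add (eVariationOn.sum_le hu hus) (eVariationOn.sum_le hu hus)

theorem norm_sub_integral_le {α E : Type*} [MeasurableSpace α] [NormedAddCommGroup E]
    [NormedSpace ℝ E] [CompleteSpace E] {μ : Measure α} [IsProbabilityMeasure μ] {f : α → E}
    {c : E} {C : ℝ} (hf : Integrable f μ) (h : ∀ᵐ x ∂μ, ‖c - f x‖ ≤ C) :
    ‖c - ∫ x, f x ∂μ‖ ≤ C := by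
  simpa [integral_sub (integrable_const c) hf] using norm_integral_le_of_norm_le_const h

theorem integrable_of_boundedVariationOn {α E : Type*} [LinearOrder α] [MeasurableSpace α]
    [NormedAddCommGroup E] {μ : Measure α} [IsFiniteMeasure μ] {f : α → E} {s : Set α}
    (hbv : BoundedVariationOn f s) (hf : AEStronglyMeasurable f μ) (hs : ∀ᵐ x ∂μ, x ∈ s) :
    Integrable f μ := by
  rcases eq_zero_or_neZero μ with rfl | _
  · exact integrable_zero_measure
  obtain ⟨a, ha⟩ := hs.exists
  refine .of_bound hf (‖f a‖ + (eVariationOn f s).toReal) ?_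
  filter_upwards [hs] with x hx
  grw [← hbv.dist_le hx ha, dist_eq_norm]
  exact norm_le_norm_add_norm_sub' _ _

end General

section Density

-- Valid outside `(0, 1)` too, where `√y = 0` for `y ≤ 0` and `0⁻¹ = 0`.
theorem logisticDensity_eq_inv (x : ℝ) :
    logisticDensity x = (Real.pi * √(x * (1 - x)))⁻¹ := by
  unfold logisticDensity
  split_ifs with hx
  · rw [one_div]
  · have : x * (1 - x) ≤ 0 := by
      by_contra! h
      exact hx (by constructor <;> nlinarith)
    simp [Real.sqrt_eq_zero_of_nonpos this]

theorem logisticDensity_nonneg (x : ℝ) : 0 ≤ logisticDensity x := by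
  rw [logisticDensity_eq_inv]; positivity

theorem logisticDensity_pos {x : ℝ} (hx : x ∈ Ioo (0 : ℝ) 1) : 0 < logisticDensity x := by
  have : 0 < x * (1 - x) := mul_pos hx.1 (sub_pos.2 hx.2)
  rw [logisticDensity_eq_inv]; positivity

theorem logisticDensity_eq_zero {x : ℝ} (hx : x ∉ Ioo (0 : ℝ) 1) : logisticDensity x = 0 :=
  if_neg hx

@[fun_prop]
theorem measurable_logisticDensity : Measurable logisticDensity := by
  simp only [funext logisticDensity_eq_inv]; fun_prop

theorem logisticDensity_eq_betaPDFReal : logisticDensity = betaPDFReal (1 / 2) (1 / 2) := by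
  ext x
  unfold logisticDensity betaPDFReal
  split_ifs with hx
  · have h_beta : beta (1 / 2) (1 / 2) = Real.pi := by
      norm_num [beta, Real.Gamma_one_half_eq, Real.mul_self_sqrt Real.pi_nonneg]
    have h_rpow (y : ℝ) (hy : 0 ≤ y) : y ^ (1 / 2 - 1 : ℝ) = (√y)⁻¹ := by
      rw [Real.sqrt_eq_rpow, ← Real.rpow_neg hy]; norm_num
    rw [h_beta, h_rpow x hx.1.le, h_rpow (1 - x) (by linarith), Real.sqrt_mul hx.1.le]
    simp only [one_div, mul_inv, mul_assoc]
  · rfl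

theorem boundedVariationOn_inv_logisticDensity :
    BoundedVariationOn (fun x => (logisticDensity x)⁻¹) (Icc 0 1) := by
  have h_sqrt : BoundedVariationOn Real.sqrt (Icc 0 1) :=
    (Real.sqrt_monotone.monotoneOn _).boundedVariationOn (C := 1) fun x hx => by
      rw [abs_of_nonneg (Real.sqrt_nonneg x)]
      exact Real.sqrt_le_one.2 hx.2
  have h_sqrt_one_sub : BoundedVariationOn (fun x => √(1 - x)) (Icc 0 1) :=
    ne_top_of_le_ne_top h_sqrt <| eVariationOn.comp_le_of_antitoneOn Real.sqrt (fun x => 1 - x)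
      (fun x _ y _ hxy => sub_le_sub_left hxy 1) fun x hx => by simpa [and_comm] using hx
  have h_mul := (lipschitzWith_smul Real.pi).comp_boundedVariationOn (h_sqrt.mul h_sqrt_one_sub)
  refine fun h => h_mul ?_
  rw [← h]
  refine eVariationOn.congr fun x hx => ?_
  simp [logisticDensity_eq_inv, Real.sqrt_mul hx.1]

/-- The arcsine law `q(x) dx` on `[0, 1]`, the absolutely continuous invariant probability measure
of the logistic map. -/
noncomputable def arcsineMeasure : Measure ℝ :=
  volume.withDensity fun x => ENNReal.ofReal (logisticDensity x)

instance : IsProbabilityMeasure arcsineMeasure := by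
  have := isProbabilityMeasureBeta (α := 1 / 2) (β := 1 / 2) (by norm_num) (by norm_num)
  simpa only [betaMeasure, funext (betaPDF_eq _ _), arcsineMeasure, logisticDensity_eq_betaPDFReal]
    using! this

theorem ae_arcsineMeasure_mem_Ioo : ∀ᵐ x ∂arcsineMeasure, x ∈ Ioo (0 : ℝ) 1 := by
  rw [arcsineMeasure, ae_withDensity_iff (by fun_prop)]
  exact ae_of_all _ fun x hx => by_contra fun h => hx (by simp [logisticDensity_eq_zero h])

end Density

section Branches

theorem logisticMap_preimage_Icc : logisticMap ⁻¹' Icc 0 1 = Icc 0 1 := by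
  ext x
  simp only [mem_preimage, mem_Icc, logisticMap]
  constructor
  · rintro ⟨h, -⟩
    constructor <;> nlinarith
  · rintro ⟨h₀, h₁⟩
    constructor <;> nlinarith [sq_nonneg (1 - 2 * x)]

@[fun_prop]
theorem measurable_logisticMap : Measurable logisticMap := by
  unfold logisticMap; fun_prop

theorem hasDerivAt_logisticMap (x : ℝ) : HasDerivAt logisticMap (4 * (1 - 2 * x)) x := by
  refine (((hasDerivAt_id x).const_mul 4).mul ((hasDerivAt_id x).const_sub 1)).congr_deriv ?_
  simp only [id]; ring

theorem sqrt_one_sub_logisticMap (x : ℝ) : √(1 - logisticMap x) = |1 - 2 * x| := by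
  rw [← Real.sqrt_sq_eq_abs, logisticMap]; ring_nf

theorem abs_deriv_mul_logisticDensity_logisticMap {x : ℝ} (hx : x ≠ 1 / 2) :
    |4 * (1 - 2 * x)| * logisticDensity (logisticMap x) = 2 * logisticDensity x := by
  have h : |1 - 2 * x| ≠ 0 := abs_ne_zero.2 fun h => hx (by linarith)
  have h_sqrt : √(logisticMap x * (1 - logisticMap x)) = 2 * |1 - 2 * x| * √(x * (1 - x)) := by
    rw [show logisticMap x * (1 - logisticMap x) = (2 * |1 - 2 * x|) ^ 2 * (x * (1 - x)) by
      rw [mul_pow, sq_abs, logisticMap]; ring, Real.sqrt_mul (sq_nonneg _),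
      Real.sqrt_sq (by positivity)]
  rw [logisticDensity_eq_inv, logisticDensity_eq_inv, h_sqrt, abs_mul, abs_of_pos four_pos]
  simp only [mul_inv]
  field_simp
  norm_num

/-- The inverse of the logistic map on `[0, 1]` with values in `[0, 1/2]`. -/
noncomputable def lowerBranch (x : ℝ) : ℝ := (1 - √(1 - x)) / 2

/-- The inverse of the logistic map on `[0, 1]` with values in `[1/2, 1]`. -/
noncomputable def upperBranch (x : ℝ) : ℝ := (1 + √(1 - x)) / 2

@[fun_prop]
theorem measurable_lowerBranch : Measurable lowerBranch := by
  unfold lowerBranch; fun_prop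

@[fun_prop]
theorem measurable_upperBranch : Measurable upperBranch := by
  unfold upperBranch; fun_prop

theorem monotone_lowerBranch : Monotone lowerBranch := fun x y hxy => by
  unfold lowerBranch; gcongr

theorem antitone_upperBranch : Antitone upperBranch := fun x y hxy => by
  unfold upperBranch; gcongr

theorem mapsTo_lowerBranch : MapsTo lowerBranch (Icc 0 1) (Icc 0 (1 / 2)) := fun x hx => by
  have : √(1 - x) ≤ 1 := Real.sqrt_le_one.2 (by linarith [hx.1])
  have := Real.sqrt_nonneg (1 - x)
  constructor <;> unfold lowerBranch <;> linarith

theorem mapsTo_upperBranch : MapsTo upperBranch (Icc 0 1) (Icc (1 / 2) 1) := fun x hx => by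
  have : √(1 - x) ≤ 1 := Real.sqrt_le_one.2 (by linarith [hx.1])
  have := Real.sqrt_nonneg (1 - x)
  constructor <;> unfold upperBranch <;> linarith

theorem logisticMap_lowerBranch {x : ℝ} (hx : x ≤ 1) : logisticMap (lowerBranch x) = x := by
  unfold logisticMap lowerBranch
  linear_combination -Real.sq_sqrt (sub_nonneg.2 hx)

theorem logisticMap_upperBranch {x : ℝ} (hx : x ≤ 1) : logisticMap (upperBranch x) = x := by
  unfold logisticMap upperBranch
  linear_combination -Real.sq_sqrt (sub_nonneg.2 hx)

theorem lowerBranch_logisticMap {x : ℝ} (hx : x ≤ 1 / 2) : lowerBranch (logisticMap x) = x := by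
  rw [lowerBranch, sqrt_one_sub_logisticMap, abs_of_nonneg (by linarith)]; ring

theorem upperBranch_logisticMap {x : ℝ} (hx : 1 / 2 ≤ x) : upperBranch (logisticMap x) = x := by
  rw [upperBranch, sqrt_one_sub_logisticMap, abs_of_nonpos (by linarith)]; ring

theorem logisticMap_lt_one {x : ℝ} (hx : x ≠ 1 / 2) : logisticMap x < 1 := by
  have : 0 < (1 - 2 * x) ^ 2 := by
    have : 1 - 2 * x ≠ 0 := fun h => hx (by linarith)
    positivity
  unfold logisticMap
  linarith

theorem logisticMap_image_Iio : logisticMap '' Iio (1 / 2) = Iio 1 := by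
  refine Subset.antisymm (image_subset_iff.2 fun x hx => logisticMap_lt_one hx.ne) fun y hy => ?_
  have : 0 < √(1 - y) := Real.sqrt_pos.2 (sub_pos.2 hy)
  exact ⟨lowerBranch y, by rw [mem_Iio, lowerBranch]; linarith, logisticMap_lowerBranch hy.le⟩

theorem logisticMap_image_Ioi : logisticMap '' Ioi (1 / 2) = Iio 1 := by
  refine Subset.antisymm (image_subset_iff.2 fun x hx => logisticMap_lt_one hx.ne') fun y hy => ?_
  have : 0 < √(1 - y) := Real.sqrt_pos.2 (sub_pos.2 hy)
  exact ⟨upperBranch y, by rw [mem_Ioi, upperBranch]; linarith, logisticMap_upperBranch hy.le⟩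

theorem setLIntegral_arcsineMeasure_of_leftInvOn {s : Set ℝ} (hs : MeasurableSet s)
    (h_image : logisticMap '' s = Iio 1) {b : ℝ → ℝ} (hb : Measurable b)
    (h_inv : LeftInvOn b logisticMap s) {f : ℝ → ℝ≥0∞} (hf : Measurable f) :
    ∫⁻ x in s, f x ∂arcsineMeasure = (∫⁻ x, f (b x) ∂arcsineMeasure) / 2 := by
  have h_half : 1 / 2 ∉ s := fun h => by
    have : logisticMap (1 / 2) ∈ Iio 1 := h_image ▸ mem_image_of_mem _ h
    norm_num [logisticMap] at this
  have h_Iio : arcsineMeasure.restrict (Iio 1) = arcsineMeasure :=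
    Measure.restrict_eq_self_of_ae_mem (ae_arcsineMeasure_mem_Ioo.mono fun _ hx => hx.2)
  have hq : Measurable fun x => ENNReal.ofReal (logisticDensity x) := by fun_prop
  rw [ENNReal.eq_div_iff two_ne_zero ENNReal.ofNat_ne_top, eq_comm]
  calc ∫⁻ x, f (b x) ∂arcsineMeasure
      = ∫⁻ x in logisticMap '' s, ENNReal.ofReal (logisticDensity x) * f (b x) := by
        rw [← h_Iio, h_image]
        exact setLIntegral_withDensity_eq_setLIntegral_mul _ hq (hf.comp hb) measurableSet_Iio
    _ = ∫⁻ x in s, ENNReal.ofReal |4 * (1 - 2 * x)| *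
          (ENNReal.ofReal (logisticDensity (logisticMap x)) * f (b (logisticMap x))) :=
        lintegral_image_eq_lintegral_abs_deriv_mul hs
          (fun x _ => (hasDerivAt_logisticMap x).hasDerivWithinAt) h_inv.injOn _
    _ = ∫⁻ x in s, 2 * (ENNReal.ofReal (logisticDensity x) * f x) := by
        refine setLIntegral_congr_fun hs fun x hx => ?_
        have hx' : x ≠ 1 / 2 := fun h => h_half (h ▸ hx)
        simp only [h_inv hx, ← mul_assoc, ← ENNReal.ofReal_mul (abs_nonneg _),
          abs_deriv_mul_logisticDensity_logisticMap hx', ENNReal.ofReal_mul zero_le_two,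
          ENNReal.ofReal_ofNat]
    _ = 2 * ∫⁻ x in s, f x ∂arcsineMeasure := by
        rw [lintegral_const_mul _ (hq.fun_mul hf), arcsineMeasure,
          setLIntegral_withDensity_eq_setLIntegral_mul _ hq hf hs]
        rfl

theorem lintegral_arcsineMeasure_eq_branches {f : ℝ → ℝ≥0∞} (hf : Measurable f) :
    ∫⁻ x, f x ∂arcsineMeasure
      = ∫⁻ x, (f (lowerBranch x) + f (upperBranch x)) / 2 ∂arcsineMeasure := by
  have h_lower := setLIntegral_arcsineMeasure_of_leftInvOn measurableSet_Iio logisticMap_image_Iio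
    measurable_lowerBranch (fun x hx => lowerBranch_logisticMap hx.le) hf
  have h_upper := setLIntegral_arcsineMeasure_of_leftInvOn measurableSet_Ioi logisticMap_image_Ioi
    measurable_upperBranch (fun x hx => upperBranch_logisticMap hx.le) hf
  have h_null : arcsineMeasure {(1 / 2 : ℝ)} = 0 :=
    withDensity_absolutelyContinuous _ _ Real.volume_singleton
  calc ∫⁻ x, f x ∂arcsineMeasure
      = ∫⁻ x in Iio (1 / 2), f x ∂arcsineMeasure + ∫⁻ x in Ioi (1 / 2), f x ∂arcsineMeasure := by
        rw [← lintegral_add_compl f measurableSet_Iio, compl_Iio,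
          setLIntegral_congr (Ioi_ae_eq_Ici' h_null)]
    _ = ∫⁻ x, (f (lowerBranch x) + f (upperBranch x)) / 2 ∂arcsineMeasure := by
        rw [h_lower, h_upper]
        simp only [div_eq_mul_inv]
        rw [lintegral_mul_const _ (by fun_prop), lintegral_add_left (by fun_prop), add_mul]

end Branches

section Transfer

/-- The transfer operator of the logistic map acting on densities with respect to
`arcsineMeasure`; on Lebesgue densities it is conjugated by division by `logisticDensity`. -/
noncomputable def logisticTransfer (f : ℝ → ℝ) (x : ℝ) : ℝ :=
  (f (lowerBranch x) + f (upperBranch x)) / 2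

variable {f : ℝ → ℝ}

theorem logisticTransfer_nonneg (hf : ∀ x, 0 ≤ f x) (x : ℝ) : 0 ≤ logisticTransfer f x :=
  div_nonneg (add_nonneg (hf _) (hf _)) zero_le_two

theorem measurable_logisticTransfer (hf : Measurable f) : Measurable (logisticTransfer f) := by
  unfold logisticTransfer; fun_prop

theorem map_withDensity_logisticTransfer (hf : Measurable f) (hf₀ : ∀ x, 0 ≤ f x) :
    (arcsineMeasure.withDensity fun x => ENNReal.ofReal (f x)).map logisticMap
      = arcsineMeasure.withDensity fun x => ENNReal.ofReal (logisticTransfer f x) := by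
  have hTf := measurable_logisticTransfer hf
  refine Measure.ext_of_lintegral _ fun g hg => ?_
  rw [lintegral_map hg measurable_logisticMap,
    lintegral_withDensity_eq_lintegral_mul _ (by fun_prop) (by fun_prop),
    lintegral_withDensity_eq_lintegral_mul _ (by fun_prop) hg,
    lintegral_arcsineMeasure_eq_branches (by fun_prop)]
  refine lintegral_congr_ae ?_
  filter_upwards [ae_arcsineMeasure_mem_Ioo] with x hx
  simp only [Pi.mul_apply, logisticMap_lowerBranch hx.2.le, logisticMap_upperBranch hx.2.le,
    logisticTransfer, ENNReal.ofReal_div_of_pos two_pos, ENNReal.ofReal_add (hf₀ _) (hf₀ _),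
    ENNReal.ofReal_ofNat, ENNReal.div_eq_inv_mul]
  ring

theorem eVariationOn_logisticTransfer_le (f : ℝ → ℝ) :
    eVariationOn (logisticTransfer f) (Icc 0 1) ≤ eVariationOn f (Icc 0 1) / 2 := by
  have h_lower : eVariationOn (f ∘ lowerBranch) (Icc 0 1) ≤ eVariationOn f (Icc 0 (1 / 2)) :=
    eVariationOn.comp_le_of_monotoneOn f _ (monotone_lowerBranch.monotoneOn _) mapsTo_lowerBranch
  have h_upper : eVariationOn (f ∘ upperBranch) (Icc 0 1) ≤ eVariationOn f (Icc (1 / 2) 1) :=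
    eVariationOn.comp_le_of_antitoneOn f _ (antitone_upperBranch.antitoneOn _) mapsTo_upperBranch
  have h_split : eVariationOn f (Icc 0 (1 / 2)) + eVariationOn f (Icc (1 / 2) 1)
      = eVariationOn f (Icc 0 1) := by
    simpa only [univ_inter] using eVariationOn.Icc_add_Icc f (s := univ) (a := (0 : ℝ)) (b := 1 / 2)
      (c := 1) (by norm_num) (by norm_num) (mem_univ _)
  have h_half : logisticTransfer f
      = (fun y : ℝ => (2⁻¹ : ℝ) • y) ∘ (f ∘ lowerBranch + f ∘ upperBranch) := by
    ext x
    exact div_eq_inv_mul _ _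
  calc eVariationOn (logisticTransfer f) (Icc 0 1)
      ≤ 2⁻¹ * eVariationOn (f ∘ lowerBranch + f ∘ upperBranch) (Icc 0 1) := by
        rw [h_half]
        simpa using (lipschitzWith_smul (β := ℝ) (2⁻¹ : ℝ)).lipschitzOnWith.comp_eVariationOn_le
          (mapsTo_univ _ _)
    _ ≤ 2⁻¹ * eVariationOn f (Icc 0 1) := by
        grw [eVariationOn_add_le, h_lower, h_upper, h_split]
    _ = eVariationOn f (Icc 0 1) / 2 := (ENNReal.div_eq_inv_mul).symm

theorem iterate_logisticTransfer_nonneg (hf : ∀ x, 0 ≤ f x) (n : ℕ) :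
    ∀ x, 0 ≤ logisticTransfer^[n] f x :=
  Function.Iterate.rec (fun g : ℝ → ℝ => ∀ x, 0 ≤ g x) hf (fun _ => logisticTransfer_nonneg) n

theorem measurable_iterate_logisticTransfer (hf : Measurable f) (n : ℕ) :
    Measurable (logisticTransfer^[n] f) :=
  Function.Iterate.rec Measurable hf (fun _ => measurable_logisticTransfer) n

theorem map_iterate_withDensity_logisticTransfer (hf : Measurable f) (hf₀ : ∀ x, 0 ≤ f x) (n : ℕ) :
    (arcsineMeasure.withDensity fun x => ENNReal.ofReal (f x)).map logisticMap^[n]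
      = arcsineMeasure.withDensity fun x => ENNReal.ofReal (logisticTransfer^[n] f x) := by
  induction n with
  | zero => exact Measure.map_id
  | succ n ih =>
    rw [Function.iterate_succ', Function.iterate_succ',
      ← Measure.map_map measurable_logisticMap (measurable_logisticMap.iterate n), ih]
    exact map_withDensity_logisticTransfer (measurable_iterate_logisticTransfer hf n)
      (iterate_logisticTransfer_nonneg hf₀ n)

theorem eVariationOn_iterate_logisticTransfer_le (f : ℝ → ℝ) (n : ℕ) :
    eVariationOn (logisticTransfer^[n] f) (Icc 0 1) ≤ eVariationOn f (Icc 0 1) / 2 ^ n := by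
  induction n with
  | zero => simp
  | succ n ih =>
    rw [Function.iterate_succ_apply']
    grw [eVariationOn_logisticTransfer_le, ih]
    rw [pow_succ, div_eq_mul_inv, div_eq_mul_inv, div_eq_mul_inv, mul_assoc,
      ENNReal.mul_inv (by simp) (by simp)]

theorem integral_iterate_logisticTransfer (hf : Measurable f) (hf₀ : ∀ x, 0 ≤ f x) (n : ℕ) :
    ∫ x, logisticTransfer^[n] f x ∂arcsineMeasure = ∫ x, f x ∂arcsineMeasure := by
  have h_mass := congr($(map_iterate_withDensity_logisticTransfer hf hf₀ n) univ)
  rw [Measure.map_apply (measurable_logisticMap.iterate n) .univ, preimage_univ,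
    withDensity_apply _ .univ, withDensity_apply _ .univ, Measure.restrict_univ] at h_mass
  rw [integral_eq_lintegral_of_nonneg_ae (ae_of_all _ (iterate_logisticTransfer_nonneg hf₀ n))
      (measurable_iterate_logisticTransfer hf n).aestronglyMeasurable, ← h_mass,
    integral_eq_lintegral_of_nonneg_ae (ae_of_all _ hf₀) hf.aestronglyMeasurable]

theorem abs_iterate_logisticTransfer_sub_integral_le (hf : Measurable f) (hf₀ : ∀ x, 0 ≤ f x)
    (hbv : BoundedVariationOn f (Icc 0 1)) (n : ℕ) {x : ℝ} (hx : x ∈ Icc (0 : ℝ) 1) :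
    |logisticTransfer^[n] f x - ∫ y, f y ∂arcsineMeasure|
      ≤ (eVariationOn f (Icc 0 1)).toReal / 2 ^ n := by
  have h_var := eVariationOn_iterate_logisticTransfer_le f n
  have h_top : eVariationOn f (Icc 0 1) / 2 ^ n ≠ ∞ := ENNReal.div_ne_top hbv (by simp)
  have hbv_n : BoundedVariationOn (logisticTransfer^[n] f) (Icc 0 1) :=
    ne_top_of_le_ne_top h_top h_var
  have h_mem : ∀ᵐ y ∂arcsineMeasure, y ∈ Icc (0 : ℝ) 1 :=
    ae_arcsineMeasure_mem_Ioo.mono fun _ hy => Ioo_subset_Icc_self hy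
  rw [← integral_iterate_logisticTransfer hf hf₀ n]
  refine norm_sub_integral_le (integrable_of_boundedVariationOn hbv_n
    (measurable_iterate_logisticTransfer hf n).aestronglyMeasurable h_mem) ?_
  filter_upwards [h_mem] with y hy
  calc ‖logisticTransfer^[n] f x - logisticTransfer^[n] f y‖
      ≤ (eVariationOn (logisticTransfer^[n] f) (Icc 0 1)).toReal := hbv_n.dist_le hx hy
    _ ≤ (eVariationOn f (Icc 0 1)).toReal / 2 ^ n := by
        simpa [ENNReal.toReal_div] using ENNReal.toReal_mono h_top h_var

end Transfer

section Convergence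

theorem integral_arcsineMeasure (g : ℝ → ℝ) :
    ∫ x, g x ∂arcsineMeasure = ∫ x in Icc 0 1, logisticDensity x * g x := by
  rw [arcsineMeasure, integral_withDensity_eq_integral_toReal_smul (by fun_prop) (by simp),
    setIntegral_eq_integral_of_forall_compl_eq_zero]
  · simp [ENNReal.toReal_ofReal (logisticDensity_nonneg _)]
  · intro x hx
    simp [logisticDensity_eq_zero fun h => hx (Ioo_subset_Icc_self h)]

variable {p : ℝ → ℝ}

theorem restrict_Icc_withDensity_eq_arcsineMeasure (hp : Measurable p) :
    (volume.withDensity fun x => ENNReal.ofReal (p x)).restrict (Icc 0 1)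
      = arcsineMeasure.withDensity fun x => ENNReal.ofReal (p x / logisticDensity x) := by
  rw [restrict_withDensity measurableSet_Icc, ← Measure.restrict_congr_set Ioo_ae_eq_Icc,
    ← withDensity_indicator measurableSet_Ioo, arcsineMeasure,
    ← withDensity_mul _ (by fun_prop) (by fun_prop)]
  congr 1
  ext x
  by_cases hx : x ∈ Ioo (0 : ℝ) 1
  · simp [hx, ← ENNReal.ofReal_mul (logisticDensity_nonneg x),
      mul_div_cancel₀ _ (logisticDensity_pos hx).ne']
  · simp [hx, logisticDensity_eq_zero hx]

theorem rnDeriv_map_iterate_logisticMap (hp : Measurable p) (hp₀ : ∀ x, 0 ≤ p x) (n : ℕ) :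
    ∀ᵐ x ∂volume.restrict (Icc 0 1),
      (((volume.withDensity fun y => ENNReal.ofReal (p y)).map logisticMap^[n]).rnDeriv
          volume x).toReal
        = logisticDensity x * logisticTransfer^[n] (fun y => p y / logisticDensity y) x := by
  set h : ℝ → ℝ := fun y => p y / logisticDensity y
  set μ := volume.withDensity fun y => ENNReal.ofReal (p y)
  have hh : Measurable h := by fun_prop
  have hh₀ (x : ℝ) : 0 ≤ h x := div_nonneg (hp₀ x) (logisticDensity_nonneg x)
  have hTh := measurable_iterate_logisticTransfer hh n
  have h_preimage : logisticMap^[n] ⁻¹' Icc 0 1 = Icc 0 1 :=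
    Function.IsFixedPt.preimage_iterate logisticMap_preimage_Icc n
  have h_restrict : (μ.map logisticMap^[n]).restrict (Icc 0 1)
      = volume.withDensity
          fun x => ENNReal.ofReal (logisticDensity x * logisticTransfer^[n] h x) := by
    rw [Measure.restrict_map (measurable_logisticMap.iterate n) measurableSet_Icc, h_preimage,
      restrict_Icc_withDensity_eq_arcsineMeasure hp,
      map_iterate_withDensity_logisticTransfer hh hh₀, arcsineMeasure,
      ← withDensity_mul _ (by fun_prop) (by fun_prop)]
    simp only [Pi.mul_def, ENNReal.ofReal_mul (logisticDensity_nonneg _)]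
  have h_rnDeriv := Measure.rnDeriv_restrict (μ.map logisticMap^[n]) volume
    (measurableSet_Icc (a := (0 : ℝ)) (b := 1))
  rw [h_restrict] at h_rnDeriv
  rw [ae_restrict_iff' measurableSet_Icc]
  filter_upwards [h_rnDeriv, Measure.rnDeriv_withDensity volume
    (f := fun x => ENNReal.ofReal (logisticDensity x * logisticTransfer^[n] h x)) (by fun_prop)]
    with x hx₁ hx₂ hx
  rw [← indicator_of_mem hx (Measure.rnDeriv _ _), ← hx₁, hx₂, ENNReal.toReal_ofReal]
  exact mul_nonneg (logisticDensity_nonneg x) (iterate_logisticTransfer_nonneg hh₀ n x)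

theorem boundedVariationOn_div_logisticDensity (hbv : BoundedVariationOn p (Icc 0 1)) :
    BoundedVariationOn (fun x => p x / logisticDensity x) (Icc 0 1) := by
  simpa only [div_eq_mul_inv] using hbv.fun_mul boundedVariationOn_inv_logisticDensity

theorem setIntegral_eq_integral_div_logisticDensity (p : ℝ → ℝ) :
    ∫ x in Icc 0 1, p x = ∫ x, p x / logisticDensity x ∂arcsineMeasure := by
  rw [integral_arcsineMeasure, integral_Icc_eq_integral_Ioo, integral_Icc_eq_integral_Ioo]
  exact setIntegral_congr_fun measurableSet_Ioo fun x hx =>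
    (mul_div_cancel₀ _ (logisticDensity_pos hx).ne').symm

end Convergence

theorem logistic_L1_convergence_rate_of_boundedVariation_general
    (p₀ : ℝ → ℝ) (hmeas : Measurable p₀) (hpos : ∀ x, 0 ≤ p₀ x)
    (hbv : BoundedVariationOn (fun x => p₀ x / logisticDensity x) (Icc 0 1)) (n : ℕ) :
    (∫ x in Icc (0 : ℝ) 1,
      |((((volume.withDensity (fun y => ENNReal.ofReal (p₀ y))).map
          (logisticMap^[n])).rnDeriv volume) x).toReal
        - (∫ y in Icc (0 : ℝ) 1, p₀ y) * logisticDensity x|)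
      ≤ (eVariationOn (fun x => p₀ x / logisticDensity x) (Icc 0 1)).toReal / 2 ^ n := by
  set h : ℝ → ℝ := fun x => p₀ x / logisticDensity x
  set m := ∫ y in Icc (0 : ℝ) 1, p₀ y
  have h_close {x : ℝ} (hx : x ∈ Icc (0 : ℝ) 1) :
      |logisticTransfer^[n] h x - m| ≤ (eVariationOn h (Icc 0 1)).toReal / 2 ^ n := by
    rw [show m = ∫ y, h y ∂arcsineMeasure from setIntegral_eq_integral_div_logisticDensity p₀]
    exact abs_iterate_logisticTransfer_sub_integral_le (by fun_prop)
      (fun x => div_nonneg (hpos x) (logisticDensity_nonneg x)) hbv n hx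
  calc _ = ∫ x in Icc 0 1, logisticDensity x * |logisticTransfer^[n] h x - m| := by
        refine integral_congr_ae ?_
        filter_upwards [rnDeriv_map_iterate_logisticMap hmeas hpos n] with x hx
        rw [hx, mul_comm m, ← mul_sub, abs_mul, abs_of_nonneg (logisticDensity_nonneg x)]
    _ = ∫ x, |logisticTransfer^[n] h x - m| ∂arcsineMeasure := (integral_arcsineMeasure _).symm
    _ ≤ (eVariationOn h (Icc 0 1)).toReal / 2 ^ n := by
        refine (Real.le_norm_self _).trans ?_
        simpa using norm_integral_le_of_norm_le_const (ae_arcsineMeasure_mem_Ioo.mono fun x hx =>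
          (norm_norm (logisticTransfer^[n] h x - m)).trans_le (h_close (Ioo_subset_Icc_self hx)))

/-- For an initial probability density `p₀` on `[0,1]` of bounded
variation, the densities `pₙ` of `(Fⁿ)_* μ₀` converge in `L¹[0,1]` to the invariant
density `q` at rate `O(2⁻ⁿ)`: there is a constant `c` (depending only on `p₀`) with
`‖pₙ − q‖_{L¹[0,1]} ≤ c / 2ⁿ` for all `n`. -/
theorem logistic_L1_convergence_rate_of_boundedVariation
    (p₀ : ℝ → ℝ) (hmeas : Measurable p₀) (hpos : ∀ x, 0 ≤ p₀ x)
    (hsupp : ∀ x, x ∉ Set.Icc (0 : ℝ) 1 → p₀ x = 0)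
    (hint : IntegrableOn p₀ (Set.Icc (0 : ℝ) 1))
    (hnorm : ∫ x in Set.Icc (0 : ℝ) 1, p₀ x = 1)
    (hbv : BoundedVariationOn p₀ (Set.Icc (0 : ℝ) 1)) :
    ∃ c : ℝ, ∀ n : ℕ,
      (∫ x in Set.Icc (0 : ℝ) 1,
        |((((volume.withDensity (fun y => ENNReal.ofReal (p₀ y))).map
            (logisticMap^[n])).rnDeriv volume) x).toReal - logisticDensity x|)
        ≤ c / 2 ^ n :=
  ⟨(eVariationOn (fun x => p₀ x / logisticDensity x) (Icc 0 1)).toReal, fun n => by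
    simpa only [hnorm, one_mul] using
    logistic_L1_convergence_rate_of_boundedVariation_general p₀ hmeas hpos
      (boundedVariationOn_div_logisticDensity hbv) n⟩
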